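/- Let (X,d) be a Polish space, f a continuous semi-flow on X, and x ∈ X a point with Σ = closure(O₊(f,x)) compact. Assume that the Birkhoff recurrent points of f lying in Σ are dense in Σ and that Σ is not minimal (there exists y ∈ Σ with closure(O₊(f,y)) ≠ Σ). Then there exists ε > 0 such that for every δ > 0 one can find y ∈ Σ with d(x,y) < δ for which the set {t ≥ 0 : d(f^t(x), f^t(y)) ≥ ε} has infinite Lebesgue measure. -/

import Mathlib

open Filter Topology Metric Set TopologicalSpace

/-- `f` is a continuous semi-flow on `X`: jointly continuous on `[0,∞) × X`,
`f 0 x = x`, and `f s (f t x) = f (s+t) x` for `s, t ≥ 0`. -/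
def IsSemiflow {X : Type*} [MetricSpace X] (f : ℝ → X → X) : Prop :=
  ContinuousOn (fun p : ℝ × X => f p.1 p.2) (Set.Ici 0 ×ˢ Set.univ) ∧
  (∀ x, f 0 x = x) ∧
  (∀ s t : ℝ, 0 ≤ s → 0 ≤ t → ∀ x, f s (f t x) = f (s + t) x)

/-- the forward orbit `O₊(f,x) = {f t x : t ≥ 0}`. -/
def posOrbit {X : Type*} [MetricSpace X] (f : ℝ → X → X) (x : X) : Set X :=
  (fun t => f t x) '' Set.Ici (0 : ℝ)

/-- `x` is Birkhoff recurrent for `f`. -/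
def BirkhoffRecurrent {X : Type*} [MetricSpace X] (f : ℝ → X → X) (x : X) : Prop :=
  ∀ ε > (0:ℝ), ∃ T > (0:ℝ), ∀ τ ≥ (0:ℝ), ∀ υ ≥ (0:ℝ),
    ∃ t : ℝ, τ < t ∧ t < τ + T ∧ dist (f υ x) (f t x) < ε

/-- `f` is topologically quasi-transitive: some forward orbit is dense. -/
def QuasiTransitive {X : Type*} [MetricSpace X] (f : ℝ → X → X) : Prop :=
  ∃ x : X, Dense (posOrbit f x)

/-- `(X,f)` is chaotic: quasi-transitive, Birkhoff recurrent points dense, and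
two motions far away from each other. -/
def Chaotic {X : Type*} [MetricSpace X] (f : ℝ → X → X) : Prop :=
  QuasiTransitive f ∧ Dense {x : X | BirkhoffRecurrent f x} ∧
  ∃ x y : X, closure (posOrbit f x) ∩ closure (posOrbit f y) = ∅

/-!
If `Σ = closure (posOrbit f x)` is not minimal, then `x` is at positive distance from `posOrbit f y`
for some `y ∈ Σ`. Since `f a x` comes arbitrarily close to `y`, continuity makes the motion of `x`
follow `posOrbit f y` closely on arbitrarily long and arbitrarily late time intervals. A Birkhoff
recurrent point `p` close to `x` returns near itself with bounded gaps, hence during each such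
interval that is long enough, and by continuity stays there for a duration independent of the
return. At those times the motion of `p` is near `p`, hence near `x`, while the motion of `x` is
near `posOrbit f y`.
-/

section MeasureAtTop

open MeasureTheory

theorem tendsto_measure_inter_Ici_atTop {α : Type*} [LinearOrder α] [NoMaxOrder α]
    [TopologicalSpace α] [ClosedIciTopology α] [MeasurableSpace α] [OpensMeasurableSpace α]
    [(atTop : Filter α).IsCountablyGenerated] {μ : Measure α} {S : Set α} (hS : μ S ≠ ⊤) :
    Tendsto (fun a => μ (S ∩ Ici a)) atTop (𝓝 0) := by
  rcases isEmpty_or_nonempty α with _ | ⟨⟨a₀⟩⟩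
  · exact tendsto_of_isEmpty
  have hempty : ⋂ a : α, Ici a = ∅ := by
    refine eq_empty_of_forall_notMem fun u hu => ?_
    obtain ⟨a, hua⟩ := exists_gt u
    exact hua.not_ge (mem_iInter.1 hu a)
  have hfin : μ.restrict S (Ici a₀) ≠ ⊤ :=
    ne_top_of_le_ne_top hS ((measure_mono (subset_univ _)).trans_eq (Measure.restrict_apply_univ S))
  have hlim := tendsto_measure_iInter_atTop (μ := μ.restrict S)
    (fun a : α => measurableSet_Ici.nullMeasurableSet) antitone_Ici ⟨a₀, hfin⟩
  simpa only [hempty, measure_empty, Function.comp_def, Measure.restrict_apply measurableSet_Ici,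
    inter_comm] using hlim

theorem volume_eq_top_of_frequently_Icc_subset {S : Set ℝ} {σ : ℝ} (hσ : 0 < σ)
    (h : ∃ᶠ t in atTop, Icc t (t + σ) ⊆ S) : volume S = ⊤ := by
  by_contra hS
  have hsmall : ∀ᶠ t in atTop, volume (S ∩ Ici t) < ENNReal.ofReal σ :=
    (tendsto_measure_inter_Ici_atTop hS).eventually_lt_const (ENNReal.ofReal_pos.2 hσ)
  obtain ⟨t, hsub, hlt⟩ := (h.and_eventually hsmall).exists
  refine hlt.not_ge ?_
  calc ENNReal.ofReal σ = volume (Icc t (t + σ)) := by rw [Real.volume_Icc, add_sub_cancel_left]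
    _ ≤ volume (S ∩ Ici t) := measure_mono (subset_inter hsub Icc_subset_Ici_self)

end MeasureAtTop

section Semiflow

variable {X : Type*} [MetricSpace X] {f : ℝ → X → X} {x y p : X}

theorem apply_mem_posOrbit (f : ℝ → X → X) (x : X) {t : ℝ} (ht : 0 ≤ t) :
    f t x ∈ posOrbit f x :=
  mem_image_of_mem (fun t => f t x) ht

theorem posOrbit_nonempty (f : ℝ → X → X) (x : X) : (posOrbit f x).Nonempty :=
  ⟨f 0 x, apply_mem_posOrbit f x le_rfl⟩

namespace IsSemiflow

theorem zero_apply (hf : IsSemiflow f) (x : X) : f 0 x = x :=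
  hf.2.1 x

theorem apply_apply (hf : IsSemiflow f) {s t : ℝ} (hs : 0 ≤ s) (ht : 0 ≤ t) (x : X) :
    f s (f t x) = f (s + t) x :=
  hf.2.2 s t hs ht x

theorem mem_posOrbit_self (hf : IsSemiflow f) (x : X) : x ∈ posOrbit f x :=
  ⟨0, self_mem_Ici, hf.zero_apply x⟩

theorem continuous_apply (hf : IsSemiflow f) {t : ℝ} (ht : 0 ≤ t) : Continuous (f t) :=
  hf.1.comp_continuous (Continuous.prodMk_right t) fun _ => ⟨ht, mem_univ _⟩

theorem closure_posOrbit_subset (hf : IsSemiflow f) (hy : y ∈ closure (posOrbit f x)) :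
    closure (posOrbit f y) ⊆ closure (posOrbit f x) := by
  refine closure_minimal ?_ isClosed_closure
  rintro _ ⟨s, hs, rfl⟩
  refine map_mem_closure (hf.continuous_apply hs) hy ?_
  rintro _ ⟨t, ht, rfl⟩
  rw [hf.apply_apply hs ht]
  exact apply_mem_posOrbit f x (add_nonneg hs ht)

theorem infDist_posOrbit_pos (hf : IsSemiflow f) (hy : y ∈ closure (posOrbit f x))
    (hne : closure (posOrbit f y) ≠ closure (posOrbit f x)) : 0 < infDist x (posOrbit f y) := by
  refine (infDist_pos_iff_notMem_closure (posOrbit_nonempty f y)).1 fun hx => hne ?_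
  exact (hf.closure_posOrbit_subset hy).antisymm (hf.closure_posOrbit_subset hx)

theorem eventually_forall_Icc_dist_lt (hf : IsSemiflow f) (y : X) (T : ℝ) {η : ℝ} (hη : 0 < η) :
    ∀ᶠ z in 𝓝 y, ∀ s ∈ Icc 0 T, dist (f s z) (f s y) < η := by
  have hcont : ContinuousOn (Function.uncurry fun z s => f s z) (univ ×ˢ Icc 0 T) :=
    hf.1.comp continuous_swap.continuousOn fun _ hq => ⟨hq.2.1, mem_univ _⟩
  obtain ⟨v, hv, hdist⟩ :=
    isCompact_Icc.mem_uniformity_of_prod hcont (mem_univ y) (dist_mem_uniformity hη)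
  exact mem_of_superset (nhdsWithin_univ y ▸ hv) hdist

theorem exists_pos_forall_Icc_dist_lt (hf : IsSemiflow f) (p : X) {η : ℝ} (hη : 0 < η) :
    ∃ r > 0, ∀ z, dist p z ≤ r → ∀ s ∈ Icc 0 r, dist p (f s z) < η := by
  have hcont : ContinuousWithinAt (fun q : ℝ × X => f q.1 q.2) (Ici 0 ×ˢ univ) (0, p) :=
    hf.1 (0, p) ⟨self_mem_Ici, mem_univ p⟩
  obtain ⟨r, hr, hnear⟩ := Metric.continuousWithinAt_iff.1 hcont η hη
  refine ⟨r / 2, half_pos hr, fun z hz s hs => ?_⟩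
  have hsz : dist (s, z) ((0 : ℝ), p) < r := by
    rw [Prod.dist_eq, Real.dist_0_eq_abs, abs_of_nonneg hs.1, dist_comm z]
    exact (max_le hs.2 hz).trans_lt (half_lt_self hr)
  simpa only [hf.zero_apply, dist_comm p] using hnear (mk_mem_prod hs.1 (mem_univ z)) hsz

theorem exists_ge_forall_Icc_infDist_lt (hf : IsSemiflow f) (hy : y ∈ closure (posOrbit f x))
    {η : ℝ} (hη : 0 < η) {τ₀ : ℝ} (hτ₀ : 0 ≤ τ₀) (T : ℝ) :
    ∃ τ ≥ τ₀, ∀ u ∈ Icc τ (τ + T), infDist (f u x) (posOrbit f y) < η := by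
  obtain ⟨_, hnear, a, ha : 0 ≤ a, rfl⟩ :=
    mem_closure_iff_nhds.1 hy _ (hf.eventually_forall_Icc_dist_lt y (τ₀ + T) hη)
  refine ⟨τ₀ + a, by linarith, fun u hu => ?_⟩
  have hua : 0 ≤ u - a := by linarith [hu.1]
  have hclose : dist (f u x) (f (u - a) y) < η := by
    simpa only [hf.apply_apply hua ha, sub_add_cancel] using
      hnear (u - a) ⟨hua, by linarith [hu.2]⟩
  exact (infDist_le_dist_of_mem (apply_mem_posOrbit f y hua)).trans_lt hclose

end IsSemiflow

theorem BirkhoffRecurrent.exists_forall_Icc_dist_lt (hp : BirkhoffRecurrent f p)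
    (hf : IsSemiflow f) {η : ℝ} (hη : 0 < η) :
    ∃ r > 0, ∃ T, ∀ τ ≥ 0, ∃ t ≥ τ, t + r ≤ τ + T ∧ ∀ u ∈ Icc t (t + r), dist p (f u p) < η := by
  obtain ⟨r, hr, hstay⟩ := hf.exists_pos_forall_Icc_dist_lt p hη
  obtain ⟨T, -, hreturn⟩ := hp r hr
  refine ⟨r, hr, T + r, fun τ hτ => ?_⟩
  obtain ⟨t, hτt, htT, htp⟩ := hreturn τ hτ 0 le_rfl
  rw [hf.zero_apply] at htp
  refine ⟨t, hτt.le, by linarith, fun u hu => ?_⟩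
  have hut : 0 ≤ u - t := sub_nonneg.2 hu.1
  simpa only [hf.apply_apply hut (hτ.trans hτt.le), sub_add_cancel] using
    hstay (f t p) htp.le (u - t) ⟨hut, by linarith [hu.2]⟩

theorem BirkhoffRecurrent.volume_le_dist_eq_top (hp : BirkhoffRecurrent f p) (hf : IsSemiflow f)
    (hy : y ∈ closure (posOrbit f x)) {c : ℝ} (hc : c < infDist p (posOrbit f y)) :
    MeasureTheory.volume {t : ℝ | 0 ≤ t ∧ c ≤ dist (f t x) (f t p)} = ⊤ := by
  obtain ⟨η, hη, hcη⟩ : ∃ η > 0, c + 2 * η = infDist p (posOrbit f y) :=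
    ⟨(infDist p (posOrbit f y) - c) / 2, by linarith, by ring⟩
  obtain ⟨r, hr, T, hvisit⟩ := hp.exists_forall_Icc_dist_lt hf hη
  refine volume_eq_top_of_frequently_Icc_subset hr (frequently_atTop.2 fun a => ?_)
  obtain ⟨τ, hτ, hfollow⟩ := hf.exists_ge_forall_Icc_infDist_lt hy hη (le_max_right a 0) T
  have hτ0 : 0 ≤ τ := (le_max_right a 0).trans hτ
  obtain ⟨t, hτt, htT, hstay⟩ := hvisit τ hτ0
  refine ⟨t, (le_max_left a 0).trans (hτ.trans hτt), fun u hu => ?_⟩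
  have hτu : τ ≤ u := hτt.trans hu.1
  refine ⟨hτ0.trans hτu, ?_⟩
  have hp_near : dist p (f u p) < η := hstay u hu
  have hx_near : infDist (f u x) (posOrbit f y) < η := hfollow u ⟨hτu, hu.2.trans htT⟩
  have htri : infDist p (posOrbit f y) ≤
      infDist (f u x) (posOrbit f y) + (dist p (f u p) + dist (f u p) (f u x)) :=
    infDist_le_infDist_add_dist.trans (by gcongr; exact dist_triangle _ _ _)
  rw [dist_comm (f u x)]
  linarith

theorem thmA_observable_sensitivity_general (hf : IsSemiflow f)
    (hrec : x ∈ closure ({z : X | BirkhoffRecurrent f z} ∩ closure (posOrbit f x)))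
    (hnm : ∃ y ∈ closure (posOrbit f x), closure (posOrbit f y) ≠ closure (posOrbit f x)) :
    ∃ ε : ℝ, 0 < ε ∧ ∀ δ > (0:ℝ), ∃ y ∈ closure (posOrbit f x), dist x y < δ ∧
      MeasureTheory.volume {t : ℝ | 0 ≤ t ∧ ε ≤ dist (f t x) (f t y)} = ⊤ := by
  obtain ⟨y, hy, hne⟩ := hnm
  have hpos : 0 < infDist x (posOrbit f y) := hf.infDist_posOrbit_pos hy hne
  refine ⟨infDist x (posOrbit f y) / 2, half_pos hpos, fun δ hδ => ?_⟩
  obtain ⟨p, ⟨hp, hp_mem⟩, hxp⟩ := Metric.mem_closure_iff.1 hrec _ (lt_min hδ (half_pos hpos))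
  obtain ⟨hxp_δ, hxp_half⟩ := lt_min_iff.1 hxp
  refine ⟨p, hp_mem, hxp_δ, hp.volume_le_dist_eq_top hf hy ?_⟩
  linarith [infDist_le_infDist_add_dist (s := posOrbit f y) (x := x) (y := p)]

end Semiflow

/-- Theorem A: a chaotic Lagrangian stable motion is observably
sensitive with observation times of infinite Lebesgue measure. -/
theorem thmA_observable_sensitivity {X : Type*} [MetricSpace X] [CompleteSpace X]
    [SeparableSpace X] (f : ℝ → X → X) (hf : IsSemiflow f) (x : X)
    (hcpt : IsCompact (closure (posOrbit f x)))
    (hrec : closure (posOrbit f x) ⊆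
      closure ({z : X | BirkhoffRecurrent f z} ∩ closure (posOrbit f x)))
    (hnm : ∃ y ∈ closure (posOrbit f x), closure (posOrbit f y) ≠ closure (posOrbit f x)) :
    ∃ ε : ℝ, 0 < ε ∧ ∀ δ > (0:ℝ), ∃ y ∈ closure (posOrbit f x), dist x y < δ ∧
      MeasureTheory.volume {t : ℝ | 0 ≤ t ∧ ε ≤ dist (f t x) (f t y)} = ⊤ :=
  thmA_observable_sensitivity_general hf (hrec (subset_closure (hf.mem_posOrbit_self x))) hnm
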